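/- (Chang) Let A be a finite set of nonzero rational numbers, let K be a positive integer with |AA| ≤ K|A|, and let k ≥ 2 be an integer. Then the k-fold sumset satisfies |kA| ≥ |A|^k / (2k^2 - k)^{kK}. -/

import Mathlib

open Finset Pointwise

/-- The `k`-fold sumset of a finite set `A` of rationals:
`kA = {a₁ + ⋯ + a_k : aᵢ ∈ A}`. -/
def kfoldSum (k : ℕ) (A : Finset ℚ) : Finset ℚ :=
  (Fintype.piFinset fun _ : Fin k => A).image fun f => ∑ i, f i

/-- The vector of all `p`-adic valuations of a rational number. -/
def valuationVector (x : ℚ) : Nat.Primes → ℚ := fun p => padicValRat p x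

lemma valuationVector_mul {x y : ℚ} (hx : x ≠ 0) (hy : y ≠ 0) :
    valuationVector (x * y) = valuationVector x + valuationVector y := by
  funext p
  have : Fact (p : ℕ).Prime := ⟨p.2⟩
  simp [valuationVector, padicValRat.mul hx hy]

lemma valuationVector_abs (x : ℚ) : valuationVector |x| = valuationVector x := by
  funext p
  rcases abs_choice x with h | h <;> simp [valuationVector, h]

lemma valuationVector_eq_of_abs_eq {x y : ℚ} (h : |x| = |y|) :
    valuationVector x = valuationVector y := by
  rw [← valuationVector_abs x, h, valuationVector_abs]

lemma abs_eq_one_of_valuationVector_eq_zero {q : ℚ} (hq : q ≠ 0)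
    (h : valuationVector q = 0) : |q| = 1 := by
  have hnum : q.num.natAbs = q.den := by
    rw [Nat.eq_iff_prime_padicValNat_eq _ _ (by simpa using hq) q.den_ne_zero]
    intro p hp
    have : (padicValRat p q : ℚ) = 0 := congrFun h ⟨p, hp⟩
    rw [padicValRat, padicValInt] at this
    have h' : ((padicValNat p q.num.natAbs : ℤ) - padicValNat p q.den) = 0 := by
      exact_mod_cast this
    omega
  rw [← Rat.num_div_den q, abs_div, ← Int.cast_abs, Int.abs_eq_natAbs, hnum]
  simp

lemma abs_eq_of_valuationVector_eq {x y : ℚ} (hx : x ≠ 0) (hy : y ≠ 0)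
    (h : valuationVector x = valuationVector y) : |x| = |y| := by
  have hxy : x / y ≠ 0 := div_ne_zero hx hy
  have hv : valuationVector (x / y) = 0 := by
    have := valuationVector_mul hxy hy
    rw [div_mul_cancel₀ _ hy, h] at this
    exact left_eq_add.mp (by rw [add_comm] at this; exact this)
  have := abs_eq_one_of_valuationVector_eq_zero hxy hv
  rw [abs_div, div_eq_one_iff_eq (abs_ne_zero.mpr hy)] at this
  exact this

/-- The multiplicative rank of a finite set of rationals: the dimension of the affine span of its
valuation vectors. -/
noncomputable def mulRank (A : Finset ℚ) : ℕ :=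
  Module.finrank ℚ (vectorSpan ℚ (valuationVector '' (A : Set ℚ)))

lemma finiteDimensional_vectorSpan_valuationVector (A : Finset ℚ) :
    FiniteDimensional ℚ (vectorSpan ℚ (valuationVector '' (A : Set ℚ))) :=
  finiteDimensional_vectorSpan_of_finite ℚ (A.finite_toSet.image _)

/-- Restricting to a level set of a nonconstant valuation lowers the multiplicative rank. -/
lemma mulRank_filter_lt {A : Finset ℚ} (p : Nat.Primes) {x y : ℚ} (hx : x ∈ A) (hy : y ∈ A)
    (hxy : padicValRat p x ≠ padicValRat p y) (j : ℤ) :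
    mulRank (A.filter fun a => padicValRat p a = j) < mulRank A := by
  have := finiteDimensional_vectorSpan_valuationVector A
  refine Submodule.finrank_lt_finrank_of_lt (lt_of_le_of_ne
    (vectorSpan_mono _ (Set.image_mono (coe_subset.mpr (filter_subset _ _)))) fun heq => ?_)
  have hker : vectorSpan ℚ (valuationVector ''
      ((A.filter fun a => padicValRat p a = j : Finset ℚ) : Set ℚ)) ≤
      LinearMap.ker (LinearMap.proj p : (Nat.Primes → ℚ) →ₗ[ℚ] ℚ) := by
    rw [vectorSpan_def, Submodule.span_le]
    rintro _ ⟨_, ⟨a, ha, rfl⟩, _, ⟨b, hb, rfl⟩, rfl⟩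
    simp [valuationVector, (mem_filter.mp (mem_coe.mp ha)).2, (mem_filter.mp (mem_coe.mp hb)).2]
  rw [heq] at hker
  have := hker (vsub_mem_vectorSpan ℚ (Set.mem_image_of_mem valuationVector hx)
    (Set.mem_image_of_mem valuationVector hy))
  simp only [vsub_eq_sub, LinearMap.mem_ker, LinearMap.proj_apply, Pi.sub_apply,
    valuationVector, sub_eq_zero] at this
  exact hxy (by exact_mod_cast this)

lemma card_filter_abs_eq_le_two (A : Finset ℚ) (c : ℚ) :
    (A.filter fun b => |b| = c).card ≤ 2 := by
  refine (card_le_card fun b hb => ?_).trans (card_le_two (a := c) (b := -c))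
  have := eq_or_eq_neg_of_abs_eq (mem_filter.mp hb).2
  simpa using this

/-- The elements of `S` that do not factor as `u * v / c` with `u, v ∈ S`. -/
def irreducibles (c : ℚ) (S : Finset ℚ) : Finset ℚ :=
  S.filter fun t => ∀ u ∈ S, ∀ v ∈ S, c * t ≠ u * v

lemma valuationVector_sub_mem_span_irreducibles {c : ℚ} (hc : 0 < c) {S : Finset ℚ}
    (hS : ∀ s ∈ S, c < s) {s : ℚ} (hs : s ∈ S) :
    valuationVector s - valuationVector c ∈ Submodule.span ℚ
      ((fun t => valuationVector t - valuationVector c) '' (irreducibles c S : Set ℚ)) := by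
  refine (S.wellFoundedOn (r := (· < ·))).induction (P := fun s =>
    valuationVector s - valuationVector c ∈ Submodule.span ℚ _) hs fun s hs ih => ?_
  by_cases hirr : s ∈ irreducibles c S
  · exact Submodule.subset_span (Set.mem_image_of_mem _ hirr)
  · simp only [irreducibles, mem_filter, not_and, not_forall, not_not] at hirr
    obtain ⟨u, hu, v, hv, huv⟩ := hirr hs
    have hcu := hS u hu
    have hcv := hS v hv
    have hus : u < s := by nlinarith
    have hvs : v < s := by nlinarith
    have hval : valuationVector s - valuationVector c =
        (valuationVector u - valuationVector c) + (valuationVector v - valuationVector c) := by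
      have h1 := valuationVector_mul hc.ne' (hc.trans (hS s hs)).ne'
      rw [huv, valuationVector_mul (hc.trans hcu).ne' (hc.trans hcv).ne'] at h1
      rw [eq_sub_of_add_eq' h1.symm]
      abel
    rw [hval]
    exact Submodule.add_mem _ (ih u hu hus) (ih v hv hvs)

/-- A version of Freiman's lemma in the multiplicative group of the rationals, where the error
term allows for the torsion `±1`. -/
lemma mul_card_le_card_mul_self {A : Finset ℚ} (hA0 : (0 : ℚ) ∉ A) {d : ℕ}
    (hd : d ≤ mulRank A) : (d + 1) * A.card ≤ (A * A).card + d * (d + 1) := by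
  induction A using Finset.strongInductionOn generalizing d with
  | _ A ih =>
  rcases A.eq_empty_or_nonempty with rfl | hne
  · simp
  obtain ⟨a, ha, hmin⟩ := exists_min_image A (fun x => |x|) hne
  have ha0 : a ≠ 0 := fun h => hA0 (h ▸ ha)
  have hapos : 0 < |a| := abs_pos.mpr ha0
  set F := A.filter fun b => |b| = |a| with hF
  set B := A.filter fun b => ¬ |b| = |a| with hB
  have hcard : F.card + B.card = A.card := card_filter_add_card_filter_not _
  have hF2 : F.card ≤ 2 := card_filter_abs_eq_le_two A _
  have hBA : B ⊆ A := filter_subset _ _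
  have hBlt : ∀ b ∈ B, |a| < |b| := fun b hb =>
    lt_of_le_of_ne (hmin b (hBA hb)) (Ne.symm (mem_filter.mp hb).2)
  have hBss : B ⊂ A := (ssubset_iff_of_subset hBA).mpr ⟨a, ha, by simp [hB]⟩
  have hB0 : (0 : ℚ) ∉ B := fun h => hA0 (hBA h)
  have hBB : B * B ⊆ A * A := mul_subset_mul hBA hBA
  have himage : valuationVector '' (A : Set ℚ) =
      insert (valuationVector a) (valuationVector '' (B : Set ℚ)) := by
    ext v
    constructor
    · rintro ⟨b, hb, rfl⟩
      by_cases hba : |b| = |a|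
      · exact Or.inl (valuationVector_eq_of_abs_eq hba)
      · exact Or.inr ⟨b, by simpa [hB] using ⟨hb, hba⟩, rfl⟩
    · rintro (rfl | ⟨b, hb, rfl⟩)
      · exact ⟨a, ha, rfl⟩
      · exact ⟨b, hBA hb, rfl⟩
  -- It suffices to find enough products outside `B * B`.
  have key : ∀ N : Finset ℚ, N ⊆ A * A → Disjoint N (B * B) →
      N.card + (B * B).card ≤ (A * A).card := fun N hN hdisj => by
    rw [← card_union_of_disjoint hdisj]
    exact card_le_card (union_subset hN hBB)
  by_cases hdB : d ≤ mulRank B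
  · set I := irreducibles |a| (B.image fun b => |b|) with hI
    have hIB : ∀ t ∈ I, ∃ b ∈ B, |b| = t := fun t ht =>
      mem_image.mp (mem_filter.mp ht).1
    have hIlt : ∀ t ∈ I, |a| < t := fun t ht => by
      obtain ⟨b, hb, rfl⟩ := hIB t ht
      exact hBlt b hb
    have hrank : mulRank A ≤ I.card := by
      classical
      refine le_trans ?_ ((finrank_span_finset_le_card (R := ℚ)
        (I.image fun t => valuationVector t - valuationVector |a|)).trans card_image_le)
      unfold mulRank
      refine Submodule.finrank_mono ?_
      rw [coe_image, vectorSpan_eq_span_vsub_set_right ℚ (Set.mem_image_of_mem valuationVector ha),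
        Submodule.span_le]
      rintro _ ⟨_, ⟨b, hb, rfl⟩, rfl⟩
      by_cases hba : |b| = |a|
      · simp [valuationVector_eq_of_abs_eq hba]
      · have := valuationVector_sub_mem_span_irreducibles hapos (S := B.image fun b => |b|)
          (by simpa using hBlt) (s := |b|)
          (mem_image_of_mem _ (mem_filter.mpr ⟨hb, hba⟩))
        simpa only [valuationVector_abs, vsub_eq_sub, SetLike.mem_coe] using this
    -- A representative in `A` of the absolute value `t`.
    let σ : ℚ → ℚ := fun t => if t ∈ A then t else -t
    have hσabs : ∀ t, 0 ≤ t → |σ t| = t := fun t ht => by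
      simp only [σ]; split_ifs <;> simp [abs_of_nonneg ht]
    have hσmem : ∀ b ∈ A, σ |b| ∈ A := fun b hb => by
      simp only [σ]
      split_ifs with h
      · exact h
      · rcases abs_choice b with h' | h'
        · exact absurd (by rwa [h']) h
        · rwa [h', neg_neg]
    have hge : ∀ t ∈ insert |a| I, 0 ≤ t ∧ σ t ∈ A := by
      intro t ht
      rcases mem_insert.mp ht with rfl | ht
      · exact ⟨hapos.le, hσmem a ha⟩
      · obtain ⟨b, hb, rfl⟩ := hIB t ht
        exact ⟨abs_nonneg b, hσmem b (hBA hb)⟩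
    have hN := key ((F ×ˢ insert |a| I).image fun x => x.1 * σ x.2) ?_ ?_
    · rw [card_image_of_injOn, card_product, card_insert_of_notMem
        (fun h => lt_irrefl _ (hIlt _ h))] at hN
      · have h1 := ih B hBss hB0 hdB
        have h2 : F.card * (d + 1) ≤ F.card * (I.card + 1) :=
          Nat.mul_le_mul_left _ (Nat.succ_le_succ (hd.trans hrank))
        rw [← hcard]
        nlinarith
      · rintro ⟨f, t⟩ hft ⟨g, u⟩ hgu heq
        simp only [coe_product, Set.mem_prod, mem_coe] at hft hgu heq
        have habs := congrArg abs heq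
        rw [abs_mul, abs_mul, (mem_filter.mp hft.1).2, (mem_filter.mp hgu.1).2,
          hσabs t (hge t hft.2).1, hσabs u (hge u hgu.2).1] at habs
        obtain rfl : t = u := mul_left_cancel₀ hapos.ne' habs
        have hσ0 : σ t ≠ 0 := fun h => hA0 (h ▸ (hge t hft.2).2)
        rw [mul_right_cancel₀ hσ0 heq]
    · intro z hz
      obtain ⟨⟨f, t⟩, hft, rfl⟩ := mem_image.mp hz
      rw [mem_product] at hft
      exact mul_mem_mul (mem_filter.mp hft.1).1 (hge t hft.2).2
    · rw [disjoint_left]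
      intro z hz hzB
      obtain ⟨⟨f, t⟩, hft, rfl⟩ := mem_image.mp hz
      obtain ⟨u, hu, v, hv, huv⟩ := mem_mul.mp hzB
      rw [mem_product] at hft
      have habs := congrArg abs huv
      simp only [abs_mul, (mem_filter.mp hft.1).2, hσabs t (hge t hft.2).1] at habs
      have hau := hBlt u hu
      have hav := hBlt v hv
      rcases mem_insert.mp hft.2 with h | h
      · simp only at h
        rw [h] at habs
        nlinarith
      · exact (mem_filter.mp h).2 |u| (mem_image_of_mem _ hu) |v| (mem_image_of_mem _ hv)
          habs.symm
  · push Not at hdB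
    obtain ⟨e, rfl⟩ : ∃ e, d = e + 1 := ⟨d - 1, by omega⟩
    have hrank : mulRank A ≤ mulRank B + 1 := by
      have := finiteDimensional_vectorSpan_valuationVector B
      unfold mulRank
      rw [himage]
      exact finrank_vectorSpan_insert_le_set ℚ _ _
    have hnot : valuationVector a ∉ affineSpan ℚ (valuationVector '' (B : Set ℚ)) := fun h => by
      have : mulRank A = mulRank B := by
        unfold mulRank
        rw [himage, vectorSpan_insert_eq_vectorSpan h]
      omega
    have hN := key (A.image fun b => a * b) ?_ ?_
    · rw [card_image_of_injective _ (mul_right_injective₀ ha0)] at hN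
      have h1 := ih B hBss hB0 (d := e) (by omega)
      have h2 : (e + 1) * F.card ≤ (e + 1) * 2 := Nat.mul_le_mul_left _ hF2
      rw [← hcard] at hN ⊢
      nlinarith
    · intro z hz
      obtain ⟨b, hb, rfl⟩ := mem_image.mp hz
      exact mul_mem_mul ha hb
    · rw [disjoint_left]
      intro z hz hzB
      obtain ⟨b, hb, rfl⟩ := mem_image.mp hz
      obtain ⟨u, hu, v, hv, huv⟩ := mem_mul.mp hzB
      have hu0 : u ≠ 0 := fun h => hB0 (h ▸ hu)
      have hv0 : v ≠ 0 := fun h => hB0 (h ▸ hv)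
      have hb0 : b ≠ 0 := fun h => hA0 (h ▸ hb)
      by_cases hba : |b| = |a|
      · have habs := congrArg abs huv
        simp only [abs_mul, hba] at habs
        have hau := hBlt u hu
        have hav := hBlt v hv
        nlinarith
      · have hbB : b ∈ B := mem_filter.mpr ⟨hb, hba⟩
        have hval := congrArg valuationVector huv
        simp only [valuationVector_mul hu0 hv0, valuationVector_mul ha0 hb0] at hval
        refine hnot ?_
        have : valuationVector a =
            (valuationVector u -ᵥ valuationVector b) +ᵥ valuationVector v := by
          rw [eq_sub_of_add_eq hval.symm, vsub_eq_sub, vadd_eq_add]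
          abel
        rw [this]
        exact vadd_mem_affineSpan_of_mem_affineSpan_of_mem_vectorSpan
          (subset_affineSpan ℚ _ (Set.mem_image_of_mem _ hv))
          (vsub_mem_vectorSpan ℚ (Set.mem_image_of_mem _ hu) (Set.mem_image_of_mem _ hbB))

/-- The sign pattern of the equation `x₁ + ⋯ + x_k = y₁ + ⋯ + y_k`. -/
def pairSign (k : ℕ) : Fin k ⊕ Fin k → ℚ := Sum.elim (fun _ => 1) (fun _ => -1)

lemma pairSign_eq_or (k : ℕ) (i : Fin k ⊕ Fin k) : pairSign k i = 1 ∨ pairSign k i = -1 := by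
  rcases i with i | i <;> simp [pairSign]

/-- The solutions of `x₁ + ⋯ + x_k = y₁ + ⋯ + y_k` with each variable in a prescribed set. -/
def zeroSums (k : ℕ) (B : Fin k ⊕ Fin k → Finset ℚ) : Finset (Fin k ⊕ Fin k → ℚ) :=
  (Fintype.piFinset B).filter fun x => ∑ i, pairSign k i * x i = 0

/-- The number of solutions of `x₁ + ⋯ + x_k = y₁ + ⋯ + y_k` in `A`. -/
def energy (k : ℕ) (A : Finset ℚ) : ℕ := (zeroSums k fun _ => A).card

/-- The character `b ↦ exp (i t b)` of the rationals. -/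
noncomputable def expChar (t : ℝ) (b : ℚ) : ℂ := Complex.exp (Complex.I * (t * b))

/-- The exponential sum `∑_{b ∈ B} exp (i t b)`. -/
noncomputable def expSum (t : ℝ) (B : Finset ℚ) : ℂ := ∑ b ∈ B, expChar t b

lemma expChar_sum {ι : Type*} (s : Finset ι) (t : ℝ) (x : ι → ℚ) :
    expChar t (∑ i ∈ s, x i) = ∏ i ∈ s, expChar t (x i) := by
  simp only [expChar, ← Complex.exp_sum]
  push_cast
  simp only [mul_sum]

lemma expChar_neg (t : ℝ) (b : ℚ) : expChar t (-b) = starRingEnd ℂ (expChar t b) := by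
  rw [expChar, expChar, ← Complex.exp_conj]
  simp

lemma sum_expChar_neg (t : ℝ) (B : Finset ℚ) :
    ∑ b ∈ B, expChar t (-b) = starRingEnd ℂ (expSum t B) := by
  simp [expSum, expChar_neg]

lemma norm_sum_expChar_sign (t : ℝ) (B : Finset ℚ) {s : ℚ} (hs : s = 1 ∨ s = -1) :
    ‖∑ b ∈ B, expChar t (s * b)‖ = ‖expSum t B‖ := by
  rcases hs with rfl | rfl
  · simp [expSum]
  · simp [sum_expChar_neg]

/-- Orthogonality of equally spaced characters on a finite set of rationals. -/
lemma exists_orthogonal_frequencies (X : Finset ℚ) : ∃ N : ℕ, 0 < N ∧ ∃ θ : ℝ, ∀ b ∈ X,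
    ∑ n ∈ range N, expChar (θ * n) b = if b = 0 then (N : ℂ) else 0 := by
  set D : ℕ := ∏ b ∈ X, b.den with hD
  have hD0 : D ≠ 0 := prod_ne_zero_iff.mpr fun b _ => b.den_ne_zero
  have hint : ∀ b ∈ X, ∃ m : ℤ, (m : ℚ) = D * b := fun b hb => by
    obtain ⟨c, hc⟩ := dvd_prod_of_mem (fun b : ℚ => b.den) hb
    refine ⟨c * b.num, ?_⟩
    rw [hD, hc]
    push_cast
    rw [mul_comm (b.den : ℚ), mul_assoc, Rat.den_mul_eq_num]
  choose! m hm using hint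
  set N : ℕ := ∑ b ∈ X, (m b).natAbs + 1 with hN
  have hN0 : (N : ℂ) ≠ 0 := Nat.cast_ne_zero.mpr (Nat.succ_ne_zero _)
  refine ⟨N, Nat.succ_pos _, 2 * Real.pi * D / N, fun b hb => ?_⟩
  split_ifs with hb0
  · simp [hb0, expChar]
  · have hmC : (m b : ℂ) = D * b := by exact_mod_cast congrArg (Rat.cast : ℚ → ℂ) (hm b hb)
    set z : ℂ := Complex.exp (2 * Real.pi * Complex.I * m b / N) with hz
    have hterm : ∀ n ∈ range N, expChar (2 * Real.pi * D / N * n) b = z ^ n := fun n _ => by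
      rw [expChar, hz, ← Complex.exp_nat_mul, hmC]
      congr 1
      push_cast
      ring
    rw [sum_congr rfl hterm]
    have hzN : z ^ N = 1 := by
      rw [hz, ← Complex.exp_nat_mul, Complex.exp_eq_one_iff]
      exact ⟨m b, by field_simp⟩
    have hz1 : z ≠ 1 := fun h => by
      rw [hz, Complex.exp_eq_one_iff] at h
      obtain ⟨c, hc⟩ := h
      have hpi : (2 * Real.pi * Complex.I : ℂ) ≠ 0 := Complex.two_pi_I_ne_zero
      have hmc : (m b : ℂ) = c * N := by
        have h1 : (2 * Real.pi * Complex.I : ℂ) * m b =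
            (2 * Real.pi * Complex.I : ℂ) * (c * N) := by
          rw [div_eq_iff hN0] at hc
          rw [hc]
          ring
        exact mul_left_cancel₀ hpi h1
      have hmc' : m b = c * N := by exact_mod_cast hmc
      have hlt : (m b).natAbs < N :=
        Nat.lt_succ_of_le (single_le_sum (f := fun b => (m b).natAbs) (fun _ _ => Nat.zero_le _) hb)
      have hm0 : m b = 0 := by
        refine Int.eq_zero_of_abs_lt_dvd (m := N) ⟨c, by rw [hmc']; ring⟩ ?_
        rw [Int.abs_eq_natAbs]
        exact_mod_cast hlt
      have h0 := hm b hb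
      rw [hm0, Int.cast_zero, zero_eq_mul] at h0
      rcases h0 with h0 | h0
      · exact hD0 (by exact_mod_cast h0)
      · exact hb0 h0
    have := geom_sum_mul z N
    rw [hzN, sub_self] at this
    exact (mul_eq_zero.mp this).resolve_right (sub_ne_zero.mpr hz1)

section Orthogonality

variable {k N : ℕ} {θ : ℝ} {A : Finset ℚ}

/-- Counting solutions by orthogonality. -/
lemma mul_card_zeroSums
    (hθ : ∀ ⦃x⦄, x ∈ (Fintype.piFinset fun _ : Fin k ⊕ Fin k => A) →
      ∑ n ∈ range N, expChar (θ * n) (∑ i, pairSign k i * x i) =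
        if ∑ i, pairSign k i * x i = 0 then (N : ℂ) else 0)
    {B : Fin k ⊕ Fin k → Finset ℚ} (hB : ∀ i, B i ⊆ A) :
    (N : ℂ) * (zeroSums k B).card =
      ∑ n ∈ range N, ∏ i, ∑ b ∈ B i, expChar (θ * n) (pairSign k i * b) := by
  simp_rw [prod_univ_sum, ← expChar_sum]
  rw [sum_comm, sum_congr rfl fun x hx => hθ (Fintype.piFinset_subset _ _ hB hx),
    ← sum_filter, sum_const, nsmul_eq_mul, mul_comm]
  rfl

lemma mul_card_zeroSums_le
    (hθ : ∀ ⦃x⦄, x ∈ (Fintype.piFinset fun _ : Fin k ⊕ Fin k => A) →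
      ∑ n ∈ range N, expChar (θ * n) (∑ i, pairSign k i * x i) =
        if ∑ i, pairSign k i * x i = 0 then (N : ℂ) else 0)
    {B : Fin k ⊕ Fin k → Finset ℚ} (hB : ∀ i, B i ⊆ A) :
    (N : ℝ) * (zeroSums k B).card ≤ ∑ n ∈ range N, ∏ i, ‖expSum (θ * n) (B i)‖ := by
  have h := congrArg norm (mul_card_zeroSums hθ hB)
  rw [norm_mul, Complex.norm_natCast, Complex.norm_natCast] at h
  rw [h]
  refine (norm_sum_le _ _).trans (sum_le_sum fun n _ => le_of_eq ?_)
  rw [norm_prod]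
  exact prod_congr rfl fun i _ => norm_sum_expChar_sign _ _ (pairSign_eq_or k i)

/-- The energy is a moment of the exponential sum. -/
lemma mul_energy
    (hθ : ∀ ⦃x⦄, x ∈ (Fintype.piFinset fun _ : Fin k ⊕ Fin k => A) →
      ∑ n ∈ range N, expChar (θ * n) (∑ i, pairSign k i * x i) =
        if ∑ i, pairSign k i * x i = 0 then (N : ℂ) else 0)
    {B : Finset ℚ} (hB : B ⊆ A) :
    (N : ℝ) * energy k B = ∑ n ∈ range N, (‖expSum (θ * n) B‖ ^ 2) ^ k := by
  have h := mul_card_zeroSums hθ (B := fun _ => B) fun _ => hB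
  have h2 : ∀ n ∈ range N, ∏ i, ∑ b ∈ B, expChar (θ * n) (pairSign k i * b) =
      (((‖expSum (θ * n) B‖ ^ 2) ^ k : ℝ) : ℂ) := fun n _ => by
    rw [Fintype.prod_sum_type]
    simp only [pairSign, Sum.elim_inl, Sum.elim_inr, one_mul, neg_one_mul, sum_expChar_neg,
      prod_const, card_univ, Fintype.card_fin]
    rw [← expSum, ← mul_pow, Complex.mul_conj']
    push_cast
    rfl
  rw [sum_congr rfl h2] at h
  exact_mod_cast h

end Orthogonality

/-- Young's inequality with natural exponents. -/
lemma succ_mul_mul_pow_le {x y : ℝ} (hx : 0 ≤ x) (hy : 0 ≤ y) (k : ℕ) :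
    ((k : ℝ) + 1) * (x * y ^ k) ≤ x ^ (k + 1) + k * y ^ (k + 1) := by
  induction k with
  | zero => simp
  | succ k ih =>
    have h1 := mul_le_mul_of_nonneg_left ih hx
    have h2 : 0 ≤ ((k : ℝ) + 1) * (y ^ k * (x - y) ^ 2) := by positivity
    push_cast
    have e1 : y ^ (k + 1) = y ^ k * y := pow_succ _ _
    have e2 : y ^ (k + 1 + 1) = y ^ k * y * y := by ring
    have e3 : x ^ (k + 1 + 1) = x * x ^ (k + 1) := by ring
    rw [e1] at h1
    rw [e1, e2, e3]
    nlinarith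

/-- Hölder's inequality for the number of solutions with two variables restricted to `B`. -/
lemma card_zeroSums_ite_le {k : ℕ} {A B : Finset ℚ} (hBA : B ⊆ A)
    {s : Finset (Fin (k + 1) ⊕ Fin (k + 1))} (hs : s.card = 2) {m e : ℝ} (hm : 0 < m) (he : 0 < e)
    (hB : (energy (k + 1) B : ℝ) ≤ m ^ (k + 1)) (hA : (energy (k + 1) A : ℝ) ≤ e ^ (k + 1)) :
    ((zeroSums (k + 1) fun i => if i ∈ s then B else A).card : ℝ) ≤ m * e ^ k := by
  obtain ⟨N, hN, θ, hθ⟩ := exists_orthogonal_frequencies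
    ((Fintype.piFinset fun _ : Fin (k + 1) ⊕ Fin (k + 1) => A).image
      fun x => ∑ i, pairSign (k + 1) i * x i)
  rw [forall_mem_image] at hθ
  have hN' : (0 : ℝ) < N := by exact_mod_cast hN
  have h1 := mul_card_zeroSums_le hθ (B := fun i => if i ∈ s then B else A)
    fun i => by split_ifs <;> simp [hBA]
  have h2 := mul_energy hθ hBA
  have h3 := mul_energy hθ (Subset.refl A)
  have hprod : ∀ n ∈ range N, ∏ i, ‖expSum (θ * n) (if i ∈ s then B else A)‖ ≤
      m * e ^ k / (k + 1) * ((‖expSum (θ * n) B‖ ^ 2) ^ (k + 1) / m ^ (k + 1) +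
        k * ((‖expSum (θ * n) A‖ ^ 2) ^ (k + 1) / e ^ (k + 1))) := fun n _ => by
    set u := ‖expSum (θ * n) B‖
    set w := ‖expSum (θ * n) A‖
    have hcompl : sᶜ.card = 2 * k := by
      rw [card_compl, hs, Fintype.card_sum, Fintype.card_fin]
      omega
    have : ∏ i, ‖expSum (θ * n) (if i ∈ s then B else A)‖ = u ^ 2 * (w ^ 2) ^ k := by
      rw [← prod_mul_prod_compl s, prod_congr rfl fun i hi => by rw [if_pos hi],
        prod_congr (s₁ := sᶜ) rfl fun i hi => by rw [if_neg (mem_compl.mp hi)],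
        prod_const, prod_const, hs, hcompl, pow_mul]
    rw [this]
    have hY := succ_mul_mul_pow_le (x := u ^ 2 / m) (y := w ^ 2 / e) (by positivity)
      (by positivity) k
    rw [div_pow, div_pow, div_pow] at hY
    have hk : (0 : ℝ) < k + 1 := by positivity
    calc u ^ 2 * (w ^ 2) ^ k
        = m * e ^ k / (k + 1) * ((k + 1) * (u ^ 2 / m * ((w ^ 2) ^ k / e ^ k))) := by
          field_simp
      _ ≤ _ := mul_le_mul_of_nonneg_left hY (by positivity)
  have h4 := h1.trans (sum_le_sum hprod)
  rw [← mul_sum, sum_add_distrib, ← mul_sum, ← sum_div, ← sum_div, ← h2, ← h3] at h4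
  have h5 : (N : ℝ) * energy (k + 1) B / m ^ (k + 1) ≤ N := by
    rw [div_le_iff₀ (by positivity)]
    exact mul_le_mul_of_nonneg_left hB hN'.le
  have h6 : (N : ℝ) * energy (k + 1) A / e ^ (k + 1) ≤ N := by
    rw [div_le_iff₀ (by positivity)]
    exact mul_le_mul_of_nonneg_left hA hN'.le
  refine le_of_mul_le_mul_left (h4.trans ?_) hN'
  calc _ ≤ m * e ^ k / (k + 1) * ((N : ℝ) + k * N) := by gcongr
    _ = N * (m * e ^ k) := by field_simp; ring

/-- In a vanishing signed sum of nonzero rationals the minimal `p`-adic valuation occurs twice. -/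
lemma exists_pair_padicValRat_eq {k : ℕ} (hk : 0 < k) (p : Nat.Primes)
    {x : Fin k ⊕ Fin k → ℚ} (hx : ∀ i, x i ≠ 0) (hsum : ∑ i, pairSign k i * x i = 0) :
    ∃ s ∈ powersetCard 2 (univ : Finset (Fin k ⊕ Fin k)), ∃ i₀, ∀ i ∈ s,
      padicValRat p (x i) = padicValRat p (x i₀) := by
  have : Fact (p : ℕ).Prime := ⟨p.2⟩
  obtain ⟨i₀, -, hmin⟩ := exists_min_image univ (fun i => padicValRat p (x i))
    ⟨Sum.inl ⟨0, hk⟩, mem_univ _⟩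
  by_cases h : ∃ i, i ≠ i₀ ∧ padicValRat p (x i) = padicValRat p (x i₀)
  · obtain ⟨i, hi, hv⟩ := h
    refine ⟨{i, i₀}, mem_powersetCard.mpr ⟨subset_univ _, card_pair hi⟩, i₀, fun l hl => ?_⟩
    rcases mem_insert.mp hl with rfl | hl
    · exact hv
    · rw [mem_singleton.mp hl]
  · push Not at h
    exfalso
    have hnorm : ∀ i, padicNorm p (pairSign k i * x i) = padicNorm p (x i) := fun i => by
      rcases pairSign_eq_or k i with hi | hi <;> simp [hi]
    have hlt : ∀ i ∈ univ.erase i₀,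
        padicNorm p (pairSign k i * x i) < padicNorm p (x i₀) := fun i hi => by
      rw [hnorm, padicNorm.eq_zpow_of_nonzero (hx i), padicNorm.eq_zpow_of_nonzero (hx i₀)]
      refine zpow_lt_zpow_right₀ (by exact_mod_cast p.2.one_lt) (neg_lt_neg ?_)
      exact lt_of_le_of_ne (hmin i (mem_univ i)) (Ne.symm (h i (ne_of_mem_erase hi)))
    have hpos : 0 < padicNorm p (x i₀) :=
      lt_of_le_of_ne (padicNorm.nonneg _) (Ne.symm (padicNorm.nonzero (hx i₀)))
    have hs := padicNorm.sum_lt' hlt hpos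
    rw [← add_sum_erase _ _ (mem_univ i₀), add_eq_zero_iff_eq_neg] at hsum
    rw [← hnorm i₀, hsum, padicNorm.neg] at hs
    exact lt_irrefl _ hs

lemma energy_pos {k : ℕ} {A : Finset ℚ} (hA : A.Nonempty) : 0 < energy k A := by
  obtain ⟨a, ha⟩ := hA
  refine card_pos.mpr ⟨fun _ => a, mem_filter.mpr ⟨by simp [ha], ?_⟩⟩
  simp [Fintype.sum_sum_type, pairSign]

lemma energy_le_card_pow (k : ℕ) (A : Finset ℚ) : energy k A ≤ (A.card ^ 2) ^ k := by
  refine (card_filter_le _ _).trans_eq ?_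
  simp [← pow_mul, two_mul]

/-- Chang's inequality: splitting a set according to a `p`-adic valuation. -/
lemma energy_le_of_padicValRat_levels {k : ℕ} {A : Finset ℚ} (hA0 : (0 : ℚ) ∉ A)
    (hA : A.Nonempty) (p : Nat.Primes) {m : ℤ → ℝ}
    (hm : ∀ j ∈ A.image (padicValRat p), 0 < m j)
    (hE : ∀ j ∈ A.image (padicValRat p),
      (energy (k + 1) (A.filter fun a => padicValRat p a = j) : ℝ) ≤ m j ^ (k + 1)) :
    (energy (k + 1) A : ℝ) ≤
      (((2 * (k + 1)).choose 2 : ℝ) * ∑ j ∈ A.image (padicValRat p), m j) ^ (k + 1) := by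
  set J := A.image (padicValRat p)
  set e : ℝ := (energy (k + 1) A : ℝ) ^ ((k + 1 : ℕ) : ℝ)⁻¹ with he
  have hpos : (0 : ℝ) < energy (k + 1) A := by exact_mod_cast energy_pos hA
  have he0 : 0 < e := Real.rpow_pos_of_pos hpos _
  have hek : e ^ (k + 1) = energy (k + 1) A :=
    Real.rpow_inv_natCast_pow hpos.le (Nat.succ_ne_zero k)
  have hsub : (zeroSums (k + 1) fun _ => A) ⊆
      (powersetCard 2 (univ : Finset (Fin (k + 1) ⊕ Fin (k + 1)))).biUnion fun s =>
        J.biUnion fun j => zeroSums (k + 1) fun i =>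
          if i ∈ s then A.filter fun a => padicValRat p a = j else A := fun x hx => by
    obtain ⟨hxA, hsum⟩ := mem_filter.mp hx
    rw [Fintype.mem_piFinset] at hxA
    obtain ⟨s, hs, i₀, hi₀⟩ := exists_pair_padicValRat_eq (Nat.succ_pos k) p
      (fun i h => hA0 (h ▸ hxA i)) hsum
    refine mem_biUnion.mpr ⟨s, hs, mem_biUnion.mpr
      ⟨padicValRat p (x i₀), mem_image_of_mem _ (hxA i₀), mem_filter.mpr ⟨?_, hsum⟩⟩⟩
    rw [Fintype.mem_piFinset]
    intro i
    split_ifs with hi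
    · exact mem_filter.mpr ⟨hxA i, hi₀ i hi⟩
    · exact hxA i
  have hcount : (energy (k + 1) A : ℝ) ≤
      ∑ s ∈ powersetCard 2 (univ : Finset (Fin (k + 1) ⊕ Fin (k + 1))), ∑ j ∈ J,
        ((zeroSums (k + 1) fun i =>
          if i ∈ s then A.filter fun a => padicValRat p a = j else A).card : ℝ) := by
    exact_mod_cast (card_le_card hsub).trans
      (card_biUnion_le.trans (sum_le_sum fun s _ => card_biUnion_le))
  have hbound := hcount.trans (sum_le_sum fun s hs => sum_le_sum fun j hj =>
    card_zeroSums_ite_le (filter_subset _ A) (mem_powersetCard.mp hs).2 (hm j hj) he0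
      (hE j hj) hek.ge)
  rw [sum_const, card_powersetCard, card_univ, Fintype.card_sum, Fintype.card_fin, ← two_mul,
    nsmul_eq_mul, ← sum_mul, ← hek, ← mul_assoc, pow_succ' e k] at hbound
  rw [← hek]
  exact pow_le_pow_left₀ he0.le (le_of_mul_le_mul_right hbound (by positivity)) _

/-- A set of small multiplicative rank has small additive energy. -/
lemma energy_le_of_mulRank_le {k d : ℕ} {A : Finset ℚ} (hA0 : (0 : ℚ) ∉ A)
    (hd : mulRank A ≤ d) :
    (energy (k + 1) A : ℝ) ≤
      (2 * ((2 * (k + 1)).choose 2 : ℝ) ^ d * A.card) ^ (k + 1) := by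
  have hC : (1 : ℝ) ≤ (2 * (k + 1)).choose 2 := by
    exact_mod_cast Nat.choose_pos (show 2 ≤ 2 * (k + 1) by omega)
  induction d using Nat.strong_induction_on generalizing A with
  | _ d ih =>
  rcases A.eq_empty_or_nonempty with rfl | hA
  · have := energy_le_card_pow (k + 1) ∅
    simp only [card_empty, ne_eq, OfNat.ofNat_ne_zero, not_false_eq_true, zero_pow,
      Nat.succ_ne_zero, Nat.le_zero] at this
    simp [this]
  by_cases hconst : ∀ p : Nat.Primes, ∀ x ∈ A, ∀ y ∈ A, padicValRat p x = padicValRat p y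
  · obtain ⟨a, ha⟩ := hA
    have hA2 : A.card ≤ 2 := by
      refine (card_le_card fun b hb => ?_).trans (card_filter_abs_eq_le_two A |a|)
      refine mem_filter.mpr ⟨hb, abs_eq_of_valuationVector_eq (fun h => hA0 (h ▸ hb))
        (fun h => hA0 (h ▸ ha)) (funext fun p => ?_)⟩
      exact congrArg Int.cast (hconst p b hb a ha)
    have h1 : (energy (k + 1) A : ℝ) ≤ ((A.card : ℝ) ^ 2) ^ (k + 1) := by
      exact_mod_cast energy_le_card_pow (k + 1) A
    refine h1.trans (pow_le_pow_left₀ (by positivity) ?_ _)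
    rw [sq]
    refine mul_le_mul_of_nonneg_right ?_ (by positivity)
    have h2 : (A.card : ℝ) ≤ 2 := by exact_mod_cast hA2
    linarith [one_le_pow₀ hC (n := d)]
  · push Not at hconst
    obtain ⟨p, x, hx, y, hy, hxy⟩ := hconst
    have hlt := mulRank_filter_lt p hx hy hxy
    obtain ⟨e, rfl⟩ : ∃ e, d = e + 1 := ⟨d - 1, by have := hlt 0; omega⟩
    refine (energy_le_of_padicValRat_levels hA0 hA p (m := fun j =>
      2 * ((2 * (k + 1)).choose 2 : ℝ) ^ e * (A.filter fun a => padicValRat p a = j).card)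
      (fun j hj => ?_) (fun j hj => ?_)).trans_eq ?_
    · obtain ⟨a, ha, rfl⟩ := mem_image.mp hj
      have : 0 < (A.filter fun b => padicValRat p b = padicValRat p a).card :=
        card_pos.mpr ⟨a, mem_filter.mpr ⟨ha, rfl⟩⟩
      positivity
    · refine ih e (Nat.lt_succ_self e) (fun h => hA0 (mem_filter.mp h).1) ?_
      have := hlt j
      omega
    · have hsum : (A.card : ℝ) = ∑ j ∈ A.image (padicValRat p),
          ((A.filter fun a => padicValRat p a = j).card : ℝ) := by
        exact_mod_cast card_eq_sum_card_image (padicValRat p) A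
      rw [← mul_sum, ← hsum]
      ring

/-- The Cauchy–Schwarz lower bound for the `k`-fold sumset in terms of the energy. -/
lemma card_pow_sq_le_card_kfoldSum_mul_energy (k : ℕ) (A : Finset ℚ) :
    (A.card ^ k) ^ 2 ≤ (kfoldSum k A).card * energy k A := by
  set P := Fintype.piFinset fun _ : Fin k => A
  set r : ℚ → Finset (Fin k → ℚ) := fun s => P.filter fun f => ∑ i, f i = s
  have hP : A.card ^ k = ∑ s ∈ kfoldSum k A, (r s).card := by
    rw [kfoldSum, ← card_eq_sum_card_image]
    simp
  rw [hP]
  refine sq_sum_le_card_mul_sum_sq.trans (Nat.mul_le_mul_left _ ?_)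
  have hsig : ∑ s ∈ kfoldSum k A, (r s).card ^ 2 =
      ((kfoldSum k A).sigma fun s => r s ×ˢ r s).card := by
    simp [card_sigma, sq]
  rw [hsig]
  refine card_le_card_of_injOn (fun z => Sum.elim z.2.1 z.2.2) ?_ ?_
  · rintro ⟨s, f, g⟩ hz
    simp only [mem_coe, mem_sigma, mem_product, r, mem_filter, P, Fintype.mem_piFinset] at hz
    obtain ⟨-, ⟨hf, hfs⟩, hg, hgs⟩ := hz
    refine mem_coe.mpr (mem_filter.mpr ⟨?_, ?_⟩)
    · rw [Fintype.mem_piFinset]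
      rintro (i | i)
      · exact hf i
      · exact hg i
    · simp [Fintype.sum_sum_type, pairSign, hfs, hgs]
  · rintro ⟨s, f, g⟩ hz ⟨t, f', g'⟩ hz' heq
    simp only [mem_coe, mem_sigma, mem_product, r, mem_filter] at hz hz'
    simp only [Sum.elim_eq_iff] at heq
    obtain ⟨rfl, rfl⟩ := heq
    obtain rfl : s = t := hz.2.1.2.symm.trans hz'.2.1.2
    rfl

theorem chang_sumset_bound
    (A : Finset ℚ) (hA0 : (0 : ℚ) ∉ A)
    (K : ℕ) (hK : 0 < K) (hAA : (A * A).card ≤ K * A.card)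
    (k : ℕ) (hk : 2 ≤ k) :
    (A.card : ℝ) ^ k / (2 * (k : ℝ) ^ 2 - (k : ℝ)) ^ (k * K) ≤
      ((kfoldSum k A).card : ℝ) := by
  obtain ⟨l, rfl⟩ : ∃ l, k = l + 1 := ⟨k - 1, by omega⟩
  set C : ℝ := ((2 * (l + 1)).choose 2 : ℝ) with hCdef
  have hC : 2 * ((l + 1 : ℕ) : ℝ) ^ 2 - ((l + 1 : ℕ) : ℝ) = C := by
    rw [hCdef, Nat.cast_choose_two]
    push_cast
    ring
  have hC6 : 6 ≤ C := by
    have : (2 : ℝ) ≤ ((l + 1 : ℕ) : ℝ) := by exact_mod_cast hk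
    rw [← hC]
    nlinarith
  rw [hC, div_le_iff₀ (by positivity)]
  rcases A.eq_empty_or_nonempty with rfl | hA
  · simp only [card_empty, Nat.cast_zero, zero_pow (Nat.succ_ne_zero l)]
    positivity
  have hApos : (0 : ℝ) < A.card := by exact_mod_cast hA.card_pos
  by_cases hsmall : (A.card : ℝ) ≤ C ^ K
  · have h1 : (1 : ℝ) ≤ (kfoldSum (l + 1) A).card := by
      exact_mod_cast ((Fintype.piFinset_nonempty.mpr fun _ => hA).image _).card_pos
    calc (A.card : ℝ) ^ (l + 1) ≤ (C ^ K) ^ (l + 1) := pow_le_pow_left₀ hApos.le hsmall _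
      _ = 1 * C ^ ((l + 1) * K) := by rw [← pow_mul, mul_comm K, one_mul]
      _ ≤ _ := mul_le_mul_of_nonneg_right h1 (by positivity)
  have hrank : mulRank A ≤ K - 1 := by
    by_contra hlt
    have hF := mul_card_le_card_mul_self hA0 (d := K) (by omega)
    have hcard : A.card ≤ K * (K + 1) := by nlinarith
    have hpow : ∀ n : ℕ, n * (n + 1) ≤ 6 ^ n := fun n => by
      induction n with
      | zero => simp
      | succ n ih =>
        have := Nat.one_le_pow n 6 (by norm_num)
        rw [pow_succ]
        rcases Nat.eq_zero_or_pos n with rfl | hn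
        · simp
        · nlinarith
    refine hsmall ?_
    calc (A.card : ℝ) ≤ ((6 ^ K : ℕ) : ℝ) := by exact_mod_cast hcard.trans (hpow K)
      _ = 6 ^ K := by push_cast; rfl
      _ ≤ C ^ K := pow_le_pow_left₀ (by norm_num) hC6 _
  have hE := energy_le_of_mulRank_le (k := l) hA0 hrank
  have hE' : (energy (l + 1) A : ℝ) ≤ C ^ ((l + 1) * K) * (A.card : ℝ) ^ (l + 1) := by
    refine hE.trans ?_
    rw [mul_comm (l + 1) K, pow_mul, ← mul_pow]
    refine pow_le_pow_left₀ (by positivity) (mul_le_mul_of_nonneg_right ?_ hApos.le) _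
    calc 2 * C ^ (K - 1) ≤ C * C ^ (K - 1) :=
          mul_le_mul_of_nonneg_right (by linarith) (by positivity)
      _ = C ^ K := mul_pow_sub_one hK.ne' C
  have hCS : ((A.card : ℝ) ^ (l + 1)) ^ 2 ≤ (kfoldSum (l + 1) A).card * energy (l + 1) A := by
    exact_mod_cast card_pow_sq_le_card_kfoldSum_mul_energy (l + 1) A
  refine le_of_mul_le_mul_right ?_ (pow_pos hApos (l + 1))
  calc (A.card : ℝ) ^ (l + 1) * (A.card : ℝ) ^ (l + 1)
      ≤ (kfoldSum (l + 1) A).card * energy (l + 1) A := by rw [← sq]; exact hCS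
    _ ≤ (kfoldSum (l + 1) A).card * (C ^ ((l + 1) * K) * (A.card : ℝ) ^ (l + 1)) :=
        mul_le_mul_of_nonneg_left hE' (by positivity)
    _ = _ := by ring
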